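/- Fix σ ∈ [0,1), μ > 0, λ > 0. Suppose x, y, v ∈ X, ε ≥ 0 satisfy v ∈ A(y) + B^{[ε]}(y) and ‖λv + y - x‖² + 2λε ≤ σ²‖y - x‖², where A is μ-strongly maximal monotone and B is maximal monotone, and set x₊ := x - λv. Then for every x* ∈ (A+B)⁻¹(0): ‖x* - x‖² ≥ 2λμ‖x* - y‖² + (1-σ²)‖y - x‖² + ‖x* - x₊‖². -/

import Mathlib

open RealInnerProductSpace Pointwise

def IsStronglyMonotoneOp {X : Type*} [NormedAddCommGroup X] [InnerProductSpace ℝ X]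
    (μ : ℝ) (A : X → Set X) : Prop :=
  ∀ ⦃x v x' v' : X⦄, v ∈ A x → v' ∈ A x' → μ * ‖x - x'‖ ^ 2 ≤ ⟪v - v', x - x'⟫

def IsMonotoneOp {X : Type*} [NormedAddCommGroup X] [InnerProductSpace ℝ X]
    (A : X → Set X) : Prop :=
  ∀ ⦃x v x' v' : X⦄, v ∈ A x → v' ∈ A x' → 0 ≤ ⟪v - v', x - x'⟫

def IsMaximalMonotone {X : Type*} [NormedAddCommGroup X] [InnerProductSpace ℝ X]
    (A : X → Set X) : Prop :=
  IsMonotoneOp A ∧ ∀ B : X → Set X, IsMonotoneOp B → (∀ x, A x ⊆ B x) → A = B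

def enl {X : Type*} [NormedAddCommGroup X] [InnerProductSpace ℝ X]
    (T : X → Set X) (ε : ℝ) (x : X) : Set X :=
  {v : X | ∀ x' v' : X, v' ∈ T x' → -ε ≤ ⟪v - v', x - x'⟫}

/-!
For every `z`, the decrease of the squared distance to `z` along the step `x ↦ x - λv` is exactly
`‖y - x‖² - ‖λv + y - x‖² + 2λ⟪v, y - z⟫`. When `z` is a zero of `A + B`, strong monotonicity of
`A` and the definition of the enlargement bound the inner product below by `μ‖y - z‖² - ε`, and
the error criterion absorbs the residual `‖λv + y - x‖²` together with the loss `2λε`.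
-/

theorem norm_sub_sq_eq_norm_sub_sub_sq_add {X : Type*} [SeminormedAddCommGroup X]
    [InnerProductSpace ℝ X] (x y z w : X) :
    ‖z - x‖ ^ 2 =
      ‖z - (x - w)‖ ^ 2 + ‖y - x‖ ^ 2 - ‖w + y - x‖ ^ 2 + 2 * ⟪w, y - z⟫ := by
  have expand_start : ‖z - x‖ ^ 2 = ‖z - y‖ ^ 2 + 2 * ⟪z - y, y - x⟫ + ‖y - x‖ ^ 2 := by
    rw [← norm_add_sq_real, sub_add_sub_cancel]
  have expand_step : ‖z - (x - w)‖ ^ 2 =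
      ‖z - y‖ ^ 2 + 2 * ⟪z - y, w + y - x⟫ + ‖w + y - x‖ ^ 2 := by
    rw [← norm_add_sq_real]
    congr 2
    abel
  have inner_residual : ⟪z - y, w + y - x⟫ = ⟪z - y, y - x⟫ - ⟪w, y - z⟫ := by
    rw [add_sub_assoc, inner_add_right, real_inner_comm, ← neg_sub y z, inner_neg_right]
    ring
  linarith

theorem IsStronglyMonotoneOp.sub_le_inner_of_mem_add_enl {X : Type*} [NormedAddCommGroup X]
    [InnerProductSpace ℝ X] {μ ε : ℝ} {A B : X → Set X} {y z v u : X}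
    (hA : IsStronglyMonotoneOp μ A) (hv : v ∈ A y + enl B ε y) (hu : u ∈ A z + B z) :
    μ * ‖y - z‖ ^ 2 - ε ≤ ⟪v - u, y - z⟫ := by
  obtain ⟨a, ha, b, hb, rfl⟩ := Set.mem_add.1 hv
  obtain ⟨a', ha', b', hb', rfl⟩ := Set.mem_add.1 hu
  calc μ * ‖y - z‖ ^ 2 - ε
      = μ * ‖y - z‖ ^ 2 + -ε := sub_eq_add_neg _ _
    _ ≤ ⟪a - a', y - z⟫ + ⟪b - b', y - z⟫ := add_le_add (hA ha ha') (hb z b' hb')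
    _ = ⟪a + b - (a' + b'), y - z⟫ := by rw [← inner_add_left, add_sub_add_comm]

theorem stmt8_general {X : Type*} [NormedAddCommGroup X] [InnerProductSpace ℝ X]
    (σ μ lam : ℝ) (hlam : 0 ≤ lam) (A B : X → Set X) (hA : IsStronglyMonotoneOp μ A)
    (x y v : X) (ε : ℝ) (hv : v ∈ A y + enl B ε y)
    (herr : ‖lam • v + y - x‖ ^ 2 + 2 * lam * ε ≤ σ ^ 2 * ‖y - x‖ ^ 2)
    (xs : X) (hxs : (0 : X) ∈ A xs + B xs) :
    2 * lam * μ * ‖xs - y‖ ^ 2 + (1 - σ ^ 2) * ‖y - x‖ ^ 2 +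
      ‖xs - (x - lam • v)‖ ^ 2 ≤ ‖xs - x‖ ^ 2 := by
  have inner_bound : lam * (μ * ‖xs - y‖ ^ 2 - ε) ≤ ⟪lam • v, y - xs⟫ := by
    rw [real_inner_smul_left, norm_sub_rev]
    simpa only [sub_zero] using
      mul_le_mul_of_nonneg_left (hA.sub_le_inner_of_mem_add_enl hv hxs) hlam
  calc 2 * lam * μ * ‖xs - y‖ ^ 2 + (1 - σ ^ 2) * ‖y - x‖ ^ 2 + ‖xs - (x - lam • v)‖ ^ 2
      ≤ ‖xs - (x - lam • v)‖ ^ 2 + ‖y - x‖ ^ 2 - ‖lam • v + y - x‖ ^ 2 +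
          2 * (lam * (μ * ‖xs - y‖ ^ 2 - ε)) := by linarith
    _ ≤ ‖xs - (x - lam • v)‖ ^ 2 + ‖y - x‖ ^ 2 - ‖lam • v + y - x‖ ^ 2 +
          2 * ⟪lam • v, y - xs⟫ := by gcongr
    _ = ‖xs - x‖ ^ 2 := (norm_sub_sq_eq_norm_sub_sub_sq_add x y xs (lam • v)).symm

theorem stmt8 {X : Type*} [NormedAddCommGroup X] [InnerProductSpace ℝ X]
    (σ μ lam : ℝ) (hσ0 : 0 ≤ σ) (hσ1 : σ < 1) (hμ : 0 < μ) (hlam : 0 < lam)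
    (A B : X → Set X) (hA : IsStronglyMonotoneOp μ A) (hAmax : IsMaximalMonotone A)
    (hB : IsMaximalMonotone B)
    (x y v : X) (ε : ℝ) (hε : 0 ≤ ε)
    (hv : v ∈ A y + enl B ε y)
    (herr : ‖lam • v + y - x‖ ^ 2 + 2 * lam * ε ≤ σ ^ 2 * ‖y - x‖ ^ 2) :
    ∀ xs : X, (0:X) ∈ A xs + B xs →
      2 * lam * μ * ‖xs - y‖ ^ 2 + (1 - σ ^ 2) * ‖y - x‖ ^ 2 +
        ‖xs - (x - lam • v)‖ ^ 2 ≤ ‖xs - x‖ ^ 2 := by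
  exact stmt8_general σ μ lam hlam.le A B hA x y v ε hv herr
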